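/- Let G and H be connected quasi-transitive locally finite graphs and let (G1, G2) be a factorisation of G. If H has precisely one end and embeds quasi-isometrically into G, then H embeds quasi-isometrically into G1 or into G2. -/

import Mathlib

open SimpleGraph

universe u v

/-! ### Quasi-isometries -/

/-- `f` is a `(γ, c)`-quasi-isometry from `G` to `H`. -/
def IsQIWith {V : Type u} {W : Type v} (G : SimpleGraph V) (H : SimpleGraph W)
    (γ c : ℝ) (f : V → W) : Prop :=
  (∀ u v : V, γ⁻¹ * (G.dist u v : ℝ) - c ≤ (H.dist (f u) (f v) : ℝ) ∧
      (H.dist (f u) (f v) : ℝ) ≤ γ * (G.dist u v : ℝ) + c) ∧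
  ∀ w : W, ∃ x : V, (H.dist w (f x) : ℝ) ≤ c

/-- `G` and `H` are quasi-isometric. -/
def QuasiIsometric {V : Type u} {W : Type v} (G : SimpleGraph V) (H : SimpleGraph W) : Prop :=
  ∃ (γ c : ℝ) (f : V → W), 1 ≤ γ ∧ 0 ≤ c ∧ IsQIWith G H γ c f

/-- `H` embeds quasi-isometrically into `G`. -/
def QIEmbeds {V : Type u} {W : Type v} (H : SimpleGraph V) (G : SimpleGraph W) : Prop :=
  ∃ (γ c : ℝ) (f : V → W), 1 ≤ γ ∧ 0 ≤ c ∧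
    ∀ u v : V, γ⁻¹ * (H.dist u v : ℝ) - c ≤ (G.dist (f u) (f v) : ℝ) ∧
      (G.dist (f u) (f v) : ℝ) ≤ γ * (H.dist u v : ℝ) + c

/-! ### Basic graph properties -/

/-- Every vertex has finite degree. -/
def LocallyFiniteGraph {V : Type u} (G : SimpleGraph V) : Prop :=
  ∀ v : V, (G.neighborSet v).Finite

/-- The automorphism group of `G` has finitely many orbits on the vertex set. -/
def QuasiTransitive {V : Type u} (G : SimpleGraph V) : Prop :=
  ∃ s : Set V, s.Finite ∧ ∀ v : V, ∃ u ∈ s, ∃ g : G ≃g G, g u = v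

/-- The automorphism group of `G` acts transitively on the vertex set. -/
def VertexTransitive {V : Type u} (G : SimpleGraph V) : Prop :=
  ∀ u v : V, ∃ g : G ≃g G, g u = v

/-- `G` has exactly one end. -/
def OneEnded {V : Type u} (G : SimpleGraph V) : Prop :=
  Nonempty G.end ∧ Subsingleton G.end

/-- `G` and `H` have the same number of ends (in the sense `0, 1, 2, …, ∞`). -/
def SameNumberOfEnds {V : Type u} {W : Type v} (G : SimpleGraph V) (H : SimpleGraph W) : Prop :=
  (Infinite G.end ∧ Infinite H.end) ∨
    (Finite G.end ∧ Finite H.end ∧ Nat.card G.end = Nat.card H.end)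

/-- There is `n : ℕ` such that every two distinct ends of `G` can be separated by removing
at most `n` vertices. -/
def Accessible {V : Type u} (G : SimpleGraph V) : Prop :=
  ∃ n : ℕ, ∀ e e' : G.end, e ≠ e' →
    ∃ K : Finset V, K.card ≤ n ∧ e.val (Opposite.op K) ≠ e'.val (Opposite.op K)

/-- `T` is a tree all of whose vertices have degree `3`. -/
def CubicTree {W : Type u} (T : SimpleGraph W) : Prop :=
  T.IsTree ∧ ∀ v : W, (T.neighborSet v).ncard = 3

/-! ### Tree amalgamations -/

/-- The bipartite graph on `VT1 ⊕ VT2` given by the relation `R`. -/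
def bipGraph {VT1 VT2 : Type u} (R : VT1 → VT2 → Prop) : SimpleGraph (VT1 ⊕ VT2) :=
  SimpleGraph.fromRel fun x y =>
    match x, y with
    | Sum.inl a, Sum.inr b => R a b
    | _, _ => False

/-- All the data of a tree amalgamation `G1 ∗_T G2`: a semiregular tree (given by its
bipartition classes `VT1`, `VT2` and the adjacency relation `Tadj`), a labelling of the
edges of the tree by pairs of indices from `K1 × K2` such that the labels at each vertex of
`VTi` biject with `Ki` in the `i`-th coordinate, families of adhesion sets `S1`, `S2`
(all of the same cardinality), and the gluing bijections `glue k l : S1 k → S2 l`. -/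
structure TreeAmalgData {V1 V2 : Type u} (G1 : SimpleGraph V1) (G2 : SimpleGraph V2) :
    Type (u + 1) where
  VT1 : Type u
  VT2 : Type u
  K1 : Type u
  K2 : Type u
  Tadj : VT1 → VT2 → Prop
  isTree : (bipGraph Tadj).IsTree
  lab1 : ∀ a b, Tadj a b → K1
  lab2 : ∀ a b, Tadj a b → K2
  lab1_bij : ∀ a : VT1, Function.Bijective fun b : {b : VT2 // Tadj a b} => lab1 a b.1 b.2
  lab2_bij : ∀ b : VT2, Function.Bijective fun a : {a : VT1 // Tadj a b} => lab2 a.1 b a.2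
  S1 : K1 → Set V1
  S2 : K2 → Set V2
  S1_nonempty : ∀ k, (S1 k).Nonempty
  glue : K1 → K2 → V1 → V2
  glue_bij : ∀ k l, Set.BijOn (glue k l) (S1 k) (S2 l)

namespace TreeAmalgData

variable {V1 V2 : Type u} {G1 : SimpleGraph V1} {G2 : SimpleGraph V2}

/-- The vertex set of the graph `G1 + G2`. -/
abbrev PlusV (D : TreeAmalgData G1 G2) : Type u := (D.VT1 × V1) ⊕ (D.VT2 × V2)

/-- The relation describing the edges added between the copies `G1^u` and `G2^v`. -/
def cross (D : TreeAmalgData G1 G2) (p : D.VT1 × V1) (q : D.VT2 × V2) : Prop :=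
  ∃ h : D.Tadj p.1 q.1, p.2 ∈ D.S1 (D.lab1 p.1 q.1 h) ∧
    q.2 = D.glue (D.lab1 p.1 q.1 h) (D.lab2 p.1 q.1 h) p.2

def plusRel (D : TreeAmalgData G1 G2) : D.PlusV → D.PlusV → Prop
  | Sum.inl p, Sum.inl p' => p.1 = p'.1 ∧ G1.Adj p.2 p'.2
  | Sum.inr q, Sum.inr q' => q.1 = q'.1 ∧ G2.Adj q.2 q'.2
  | Sum.inl p, Sum.inr q => D.cross p q
  | Sum.inr _, Sum.inl _ => False

/-- The graph `G1 + G2`: disjoint copies of `G1` and `G2` along the tree, together with the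
added matching edges between adhesion sets. -/
def plusGraph (D : TreeAmalgData G1 G2) : SimpleGraph D.PlusV :=
  SimpleGraph.fromRel D.plusRel

/-- The relation identifying the endpoints of the added edges (which get contracted). -/
def idRel (D : TreeAmalgData G1 G2) : D.PlusV → D.PlusV → Prop :=
  fun x y => ∃ p q, x = Sum.inl p ∧ y = Sum.inr q ∧ D.cross p q

/-- Vertex set of the tree amalgamation `G1 ∗_T G2`. -/
abbrev AmalgV (D : TreeAmalgData G1 G2) : Type u := Quot D.idRel

/-- The canonical contraction map `ψ : V(G1 + G2) → V(G1 ∗_T G2)`. -/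
def toAmalg (D : TreeAmalgData G1 G2) : D.PlusV → D.AmalgV := Quot.mk _

/-- The tree amalgamation `G1 ∗_T G2`, obtained from `G1 + G2` by contracting all the
added edges. -/
def amalgGraph (D : TreeAmalgData G1 G2) : SimpleGraph D.AmalgV :=
  SimpleGraph.fromRel fun x y =>
    ∃ a b, x = D.toAmalg a ∧ y = D.toAmalg b ∧ D.plusGraph.Adj a b

/-- The tree vertex at which a vertex of `G1 + G2` lives. -/
def site (D : TreeAmalgData G1 G2) : D.PlusV → D.VT1 ⊕ D.VT2
  | Sum.inl p => Sum.inl p.1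
  | Sum.inr q => Sum.inr q.1

/-- The set of tree vertices hosting representatives of `x`; the identification size of `x`
is the number of its elements. -/
def support (D : TreeAmalgData G1 G2) (x : D.AmalgV) : Set (D.VT1 ⊕ D.VT2) :=
  {t | ∃ p, D.toAmalg p = x ∧ D.site p = t}

/-- Every vertex of `G1 ∗_T G2` has finite identification size. -/
def FiniteIdentification (D : TreeAmalgData G1 G2) : Prop :=
  ∀ x : D.AmalgV, (D.support x).Finite

/-- All adhesion sets are finite. -/
def FiniteAdhesion (D : TreeAmalgData G1 G2) : Prop :=
  (∀ k, (D.S1 k).Finite) ∧ ∀ l, (D.S2 l).Finite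

/-- The tree amalgamation is trivial: the contraction map restricts to a bijection on some
copy of `G1` or of `G2`. -/
def IsTrivial (D : TreeAmalgData G1 G2) : Prop :=
  (∃ a : D.VT1, Function.Bijective fun x : V1 => D.toAmalg (Sum.inl (a, x))) ∨
  ∃ b : D.VT2, Function.Bijective fun y : V2 => D.toAmalg (Sum.inr (b, y))

end TreeAmalgData

/-- Some group of automorphisms of `G` acts with finitely many orbits on the vertices of `G`
and with finitely many orbits on the family `S` of adhesion sets of `G`. -/
def GoodAction {V : Type u} (G : SimpleGraph V) {K : Type u} (S : K → Set V) : Prop :=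
  ∃ Γ : Subgroup (G ≃g G),
    (∃ s : Set V, s.Finite ∧ ∀ v : V, ∃ u ∈ s, ∃ g ∈ Γ, g u = v) ∧
    ∃ I : Set K, I.Finite ∧ ∀ k : K, ∃ k' ∈ I, ∃ g ∈ Γ, ⇑g '' S k' = S k

/-- A bundled graph. -/
structure BGraph : Type (u + 1) where
  V : Type u
  G : SimpleGraph V

/-- `Z` is (isomorphic to) a tree amalgamation of `X` and `Y` of finite adhesion and finite
identification. -/
def AmalgStep (X Y Z : BGraph.{u}) : Prop :=
  ∃ D : TreeAmalgData X.G Y.G,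
    D.FiniteAdhesion ∧ D.FiniteIdentification ∧ Nonempty (Z.G ≃g D.amalgGraph)

/-- `Z` is (isomorphic to) a tree amalgamation of `X` and `Y` of finite adhesion and finite
identification such that some group of automorphisms of each factor acts with finitely many
orbits on that factor and on the set of its adhesion sets. -/
def GoodAmalgStep (X Y Z : BGraph.{u}) : Prop :=
  ∃ D : TreeAmalgData X.G Y.G,
    D.FiniteAdhesion ∧ D.FiniteIdentification ∧
    GoodAction X.G D.S1 ∧ GoodAction Y.G D.S2 ∧ Nonempty (Z.G ≃g D.amalgGraph)

/-- `Z` is obtained from the list `l` of graphs by iterated tree amalgamations of finite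
adhesion and finite identification. -/
inductive IterAmalg : BGraph.{u} → List BGraph.{u} → Prop
  | single (X : BGraph) : IterAmalg X [X]
  | step {X Y Z : BGraph} {l1 l2 : List BGraph} :
      IterAmalg X l1 → IterAmalg Y l2 → AmalgStep X Y Z → IterAmalg Z (l1 ++ l2)

/-- `Z` is obtained from the list `l` of graphs by iterated tree amalgamations of finite
adhesion and finite identification with quasi-transitive actions on the factors and their
adhesion sets. -/
inductive GoodIterAmalg : BGraph.{u} → List BGraph.{u} → Prop
  | single (X : BGraph) : GoodIterAmalg X [X]
  | step {X Y Z : BGraph} {l1 l2 : List BGraph} :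
      GoodIterAmalg X l1 → GoodIterAmalg Y l2 → GoodAmalgStep X Y Z →
        GoodIterAmalg Z (l1 ++ l2)

/-- `l` is a factorisation of the graph `Gb`. -/
def IsFactorisation (Gb : BGraph.{u}) (l : List BGraph.{u}) : Prop :=
  (∀ X ∈ l, X.G.Connected ∧ LocallyFiniteGraph X.G ∧ QuasiTransitive X.G) ∧
    GoodIterAmalg Gb l

/-- A factorisation is terminal if every factor has at most one end. -/
def IsTerminal (l : List BGraph.{u}) : Prop := ∀ X ∈ l, Subsingleton X.G.end

/-!
The copies of the factors in `G = G1 ∗_T G2` are the parts of a tree-decomposition of `G` over `T`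
whose adhesion sets have bounded diameter. As `H` is one-ended and quasi-transitive, it stays
connected far from any of its vertices, with uniform bounds. So the image of `H` in `G`
cannot go far from an adhesion set on both sides of it: for some uniform `R` and every edge of `T`,
on one of the two sides the image stays within distance `R` of the adhesion set. Orient every edge
of `T` away from such a small side. Since `G` is locally finite and every vertex lies in finitely
many parts, this orientation has a sink, so the whole image stays within distance `R` of one part.
Sending every other vertex into the adhesion set through which it sees that part is a Lipschitz
retraction of `G` onto the part; it moves the image by a bounded amount only.
-/

section Distance

variable {V : Type u} {V' : Type v} {G : SimpleGraph V} {G' : SimpleGraph V'}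

theorem dist_map_hom_le (f : G →g G') {x y : V} (hxy : G.Reachable x y) :
    G'.dist (f x) (f y) ≤ G.dist x y := by
  obtain ⟨w, hw⟩ := hxy.exists_walk_length_eq_dist
  simpa [hw] using dist_le (w.map f)

theorem dist_map_iso (e : G ≃g G') (x y : V) : G'.dist (e x) (e y) = G.dist x y := by
  by_cases hxy : G.Reachable x y
  · refine (dist_map_hom_le e.toHom hxy).antisymm ?_
    simpa using dist_map_hom_le e.symm.toHom (e.reachable_iff.2 hxy)
  · rw [dist_eq_zero_of_not_reachable hxy,
      dist_eq_zero_of_not_reachable (mt e.reachable_iff.1 hxy)]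

theorem LocallyFiniteGraph.of_iso (e : G ≃g G') (hG : LocallyFiniteGraph G) :
    LocallyFiniteGraph G' := by
  intro v
  refine ((hG (e.symm v)).image e).subset fun w hw => ⟨e.symm w, ?_, e.apply_symm_apply w⟩
  exact e.symm.map_adj_iff.2 hw

theorem dist_map_le_mul_dist (hG : G.Connected) (hG' : G'.Connected) {f : V → V'} {C : ℕ}
    (hf : ∀ x y, G.Adj x y → G'.dist (f x) (f y) ≤ C) (x y : V) :
    G'.dist (f x) (f y) ≤ C * G.dist x y := by
  obtain ⟨w, hw⟩ := hG.exists_walk_length_eq_dist x y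
  rw [← hw]
  clear hw
  induction w with
  | nil => simp
  | @cons x z y hxz w ih =>
    calc G'.dist (f x) (f y) ≤ G'.dist (f x) (f z) + G'.dist (f z) (f y) := hG'.dist_triangle
      _ ≤ C + C * w.length := add_le_add (hf x z hxz) ih
      _ = C * (Walk.cons hxz w).length := by rw [Walk.length_cons]; ring

theorem finite_setOf_dist_le (hG : G.Connected) (hlf : LocallyFiniteGraph G) (z : V) (n : ℕ) :
    {x | G.dist z x ≤ n}.Finite := by
  induction n with
  | zero =>
    refine (Set.finite_singleton z).subset fun x hx => ?_
    exact (hG.dist_eq_zero_iff.1 (Nat.le_zero.1 hx)).symm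
  | succ n ih =>
    refine (ih.union (ih.biUnion fun y _ => hlf y)).subset fun x hx => ?_
    obtain ⟨w, hw⟩ := hG.exists_walk_length_eq_dist x z
    cases w with
    | nil => exact Or.inl (by simp)
    | @cons _ y _ hxy w =>
      refine Or.inr (Set.mem_biUnion (x := y) ?_ hxy.symm)
      have hyz := dist_le w
      rw [Walk.length_cons, dist_comm] at hw
      rw [Set.mem_ofPred_eq] at hx ⊢
      rw [dist_comm]
      lia

end Distance

section QuasiIsometricEmbedding

universe w

variable {V : Type u} {W : Type v} {P : Type w}
  {H : SimpleGraph V} {G : SimpleGraph W} {K : SimpleGraph P}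

/-- `f` is a quasi-isometric embedding of `H` into `G` with the single natural-number constant
`k`. Unlike in `QIEmbeds`, the lower bound is solved for `H.dist`, so that no division occurs. -/
def IsQIEmbeddingWith (H : SimpleGraph V) (G : SimpleGraph W) (k : ℕ) (f : V → W) : Prop :=
  ∀ x y, H.dist x y ≤ k * G.dist (f x) (f y) + k ∧ G.dist (f x) (f y) ≤ k * H.dist x y + k

theorem qiEmbeds_iff_exists_isQIEmbeddingWith :
    QIEmbeds H G ↔ ∃ k f, IsQIEmbeddingWith H G k f := by
  constructor
  · rintro ⟨γ, c, f, hγ, hc, hf⟩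
    obtain ⟨k, hk⟩ := exists_nat_ge (γ * (c + 1))
    have hγk : γ ≤ k := by nlinarith
    have hck : c ≤ k := by nlinarith
    have hγck : γ * c ≤ k := by nlinarith
    refine ⟨k, f, fun x y => ⟨?_, ?_⟩⟩
    · have hle : (H.dist x y : ℝ) ≤ γ * (G.dist (f x) (f y) + c) := by
        rw [← inv_mul_le_iff₀ (by linarith)]
        linarith [(hf x y).1]
      have hmul := mul_le_mul_of_nonneg_right hγk (Nat.cast_nonneg (G.dist (f x) (f y)))
      exact_mod_cast (show (H.dist x y : ℝ) ≤ k * G.dist (f x) (f y) + k by linarith [hγck])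
    · have hmul := mul_le_mul_of_nonneg_right hγk (Nat.cast_nonneg (H.dist x y))
      have hle := (hf x y).2
      exact_mod_cast (show (G.dist (f x) (f y) : ℝ) ≤ k * H.dist x y + k by linarith)
  · rintro ⟨k, f, hf⟩
    have hk : (0 : ℝ) ≤ k := k.cast_nonneg
    refine ⟨k + 1, k, f, by linarith, hk, fun x y => ⟨?_, ?_⟩⟩
    · have hle : (H.dist x y : ℝ) ≤ k * G.dist (f x) (f y) + k := by exact_mod_cast (hf x y).1
      rw [sub_le_iff_le_add, inv_mul_le_iff₀ (by linarith)]
      nlinarith [(G.dist (f x) (f y)).cast_nonneg (α := ℝ)]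
    · have hle : (G.dist (f x) (f y) : ℝ) ≤ k * H.dist x y + k := by exact_mod_cast (hf x y).2
      linarith [(H.dist x y).cast_nonneg (α := ℝ)]

theorem QIEmbeds.trans_iso (hHG : QIEmbeds H G) (e : G ≃g K) : QIEmbeds H K := by
  obtain ⟨γ, c, f, hγ, hc, hf⟩ := hHG
  exact ⟨γ, c, e ∘ f, hγ, hc, by simpa only [Function.comp_apply, dist_map_iso] using hf⟩

theorem QIEmbeds.of_retraction (hG : G.Connected) {ι : P → W} {ρ : W → P} {C : ℕ}
    (hι : ∀ p q, G.dist (ι p) (ι q) ≤ K.dist p q)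
    (hρ : ∀ x y, K.dist (ρ x) (ρ y) ≤ C * G.dist x y)
    (hρι : ∀ p, ρ (ι p) = p) {k R : ℕ} {f : V → W} (hf : IsQIEmbeddingWith H G k f)
    (hfι : ∀ h, ∃ p, G.dist (f h) (ι p) ≤ R) :
    QIEmbeds H K := by
  let D := R + C * R
  have hfρ : ∀ h, G.dist (f h) (ι (ρ (f h))) ≤ D := by
    intro h
    obtain ⟨p, hp⟩ := hfι h
    calc G.dist (f h) (ι (ρ (f h)))
        ≤ G.dist (f h) (ι p) + G.dist (ι p) (ι (ρ (f h))) := hG.dist_triangle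
      _ ≤ G.dist (f h) (ι p) + K.dist (ρ (ι p)) (ρ (f h)) := by rw [hρι]; gcongr; exact hι _ _
      _ ≤ G.dist (f h) (ι p) + C * G.dist (f h) (ι p) := by
        rw [G.dist_comm (u := f h)]; gcongr; exact hρ _ _
      _ ≤ D := add_le_add hp (Nat.mul_le_mul_left C hp)
  refine qiEmbeds_iff_exists_isQIEmbeddingWith.2
    ⟨k * (2 * D + 1 + C), ρ ∘ f, fun x y => ⟨?_, ?_⟩⟩
  · have hdist : G.dist (f x) (f y) ≤ K.dist (ρ (f x)) (ρ (f y)) + 2 * D := by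
      have hx := hfρ x
      have hy := hfρ y
      have hxy := hι (ρ (f x)) (ρ (f y))
      have htri₁ := hG.dist_triangle (u := f x) (v := ι (ρ (f x))) (w := f y)
      have htri₂ := hG.dist_triangle (u := ι (ρ (f x))) (v := ι (ρ (f y))) (w := f y)
      rw [G.dist_comm (u := f y)] at hy
      lia
    calc H.dist x y ≤ k * G.dist (f x) (f y) + k := (hf x y).1
      _ ≤ k * (K.dist (ρ (f x)) (ρ (f y)) + 2 * D) + k := by gcongr
      _ ≤ k * (2 * D + 1 + C) * K.dist (ρ (f x)) (ρ (f y)) + k * (2 * D + 1 + C) := by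
        nlinarith [Nat.zero_le (k * D * K.dist (ρ (f x)) (ρ (f y))), Nat.zero_le (k * C),
          Nat.zero_le (k * C * K.dist (ρ (f x)) (ρ (f y)))]
  · calc K.dist (ρ (f x)) (ρ (f y)) ≤ C * G.dist (f x) (f y) := hρ _ _
      _ ≤ C * (k * H.dist x y + k) := by gcongr; exact (hf x y).2
      _ ≤ k * (2 * D + 1 + C) * H.dist x y + k * (2 * D + 1 + C) := by
        nlinarith [Nat.zero_le (k * D * H.dist x y), Nat.zero_le (k * D),
          Nat.zero_le (k * H.dist x y)]

end QuasiIsometricEmbedding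

section Ends

variable {V : Type u} {G : SimpleGraph V}

open CategoryTheory in
theorem exists_end_eq_of_infinite (hG : G.Connected) (hlf : LocallyFiniteGraph G) {K : Finset V}
    {C : G.ComponentCompl K} (hC : C.supp.Infinite) : ∃ e : G.end, e.1 (Opposite.op K) = C := by
  have : LocallyFinite G := fun v => (hlf v).fintype
  have : Fact G.Preconnected := ⟨hG.preconnected⟩
  have : Infinite V := Set.infinite_univ_iff.1 (hC.mono (Set.subset_univ _))
  let F := G.componentComplFunctor
  have : ∀ K, Finite (F.obj K) := fun K => G.componentCompl_finite K.unop
  have : ∀ K, Nonempty (F.obj K) := fun K =>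
    G.componentCompl_nonempty_of_infinite K.unop
  have hML : F.IsMittagLeffler :=
    F.isMittagLeffler_of_exists_finite_range fun K => ⟨K, 𝟙 K, Set.toFinite _⟩
  have := F.toEventualRanges_nonempty hML
  obtain ⟨e, he⟩ := F.toEventualRanges.eval_section_surjective_of_surjective
    (F.surjective_toEventualRanges hML) (Opposite.op K)
    ⟨C, (G.infinite_iff_in_eventualRange C).1 hC⟩
  exact ⟨F.toEventualRangesSectionsEquiv e, congrArg Subtype.val he⟩

theorem exists_walk_support_subset_compl {K : Set V} {x y : V} {hx : x ∉ K} {hy : y ∉ K}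
    (hxy : G.componentComplMk hx = G.componentComplMk hy) :
    ∃ w : G.Walk x y, ∀ z ∈ w.support, z ∉ K := by
  obtain ⟨w⟩ := ConnectedComponent.eq.1 hxy
  refine ⟨w.map (Embedding.induce Kᶜ).toHom, fun z hz => ?_⟩
  obtain ⟨z, -, rfl⟩ := List.mem_map.1 (Walk.support_map _ w ▸ hz)
  exact z.2

theorem exists_walk_far_from (hG : G.Connected) (hlf : LocallyFiniteGraph G)
    (hend : Subsingleton G.end) (r : ℕ) (z : V) :
    ∃ r', ∀ x y, r' < G.dist z x → r' < G.dist z y →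
      ∃ w : G.Walk x y, ∀ v ∈ w.support, r < G.dist z v := by
  have : LocallyFinite G := fun v => (hlf v).fintype
  have : Fact G.Preconnected := ⟨hG.preconnected⟩
  let K : Finset V := (finite_setOf_dist_le hG hlf z r).toFinset
  have hK : ∀ v, v ∉ (K : Set V) ↔ r < G.dist z v := by simp [K]
  let S : Set V := ⋃ C ∈ {C : G.ComponentCompl K | C.supp.Finite}, C.supp
  have hS : S.Finite :=
    have := G.componentCompl_finite K
    Set.Finite.biUnion (Set.toFinite _) fun C hC => hC
  obtain ⟨r', hr'⟩ := (hS.image (G.dist z)).bddAbove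
  have infinite_supp : ∀ x, r' < G.dist z x → ∀ hx : x ∉ (K : Set V),
      (G.componentComplMk hx).supp.Infinite := fun x hxr hx hfin =>
    hxr.not_ge <| hr' ⟨x, Set.mem_biUnion (x := G.componentComplMk hx) hfin
      (G.componentComplMk_mem hx), rfl⟩
  refine ⟨max r r', fun x y hx hy => ?_⟩
  have hxK := (hK x).2 (lt_of_le_of_lt (le_max_left r r') hx)
  have hyK := (hK y).2 (lt_of_le_of_lt (le_max_left r r') hy)
  obtain ⟨e, he⟩ := exists_end_eq_of_infinite hG hlf
    (infinite_supp x (lt_of_le_of_lt (le_max_right r r') hx) hxK)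
  obtain ⟨e', he'⟩ := exists_end_eq_of_infinite hG hlf
    (infinite_supp y (lt_of_le_of_lt (le_max_right r r') hy) hyK)
  rw [Subsingleton.elim e' e] at he'
  obtain ⟨w, hw⟩ := exists_walk_support_subset_compl (he.symm.trans he')
  exact ⟨w, fun v hv => (hK v).1 (hw v hv)⟩

theorem exists_walk_far_from_uniform (hG : G.Connected) (hlf : LocallyFiniteGraph G)
    (hqt : QuasiTransitive G) (hend : Subsingleton G.end) (r : ℕ) :
    ∃ r', ∀ z x y, r' < G.dist z x → r' < G.dist z y →
      ∃ w : G.Walk x y, ∀ v ∈ w.support, r < G.dist z v := by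
  obtain ⟨s, hs, hsV⟩ := hqt
  choose f hf using exists_walk_far_from hG hlf hend r
  obtain ⟨r', hr'⟩ := (hs.image f).bddAbove
  refine ⟨r', fun z x y hx hy => ?_⟩
  obtain ⟨u, hu, g, rfl⟩ := hsV z
  obtain ⟨x, rfl⟩ := g.surjective x
  obtain ⟨y, rfl⟩ := g.surjective y
  have hfu : f u ≤ r' := hr' ⟨u, hu, rfl⟩
  rw [dist_map_iso] at hx hy
  obtain ⟨w, hw⟩ := hf u x y (hfu.trans_lt hx) (hfu.trans_lt hy)
  refine ⟨w.map g.toHom, fun v hv => ?_⟩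
  rw [Walk.support_map, List.mem_map] at hv
  obtain ⟨v, hv, rfl⟩ := hv
  exact (hw v hv).trans_eq (dist_map_iso g u v).symm

end Ends

section Trees

variable {τ : Type u} {T : SimpleGraph τ}

/-- The branch at `t` in the direction of its neighbour `s`: if `T` is a tree, the component of
`T` minus the edge `ts` that contains `s`, described by distances to avoid deleting the edge. -/
def branch (T : SimpleGraph τ) (t s : τ) : Set τ :=
  {u | T.dist u s < T.dist u t}

theorem dist_eq_add_one_of_mem_branch {t s u : τ} (hts : T.Adj t s) (hu : u ∈ branch T t s) :
    T.dist u t = T.dist u s + 1 := by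
  have hlt : T.dist u s < T.dist u t := hu
  rcases hts.diff_dist_adj (u := u) with h | h | h <;> lia

theorem self_mem_branch {t s : τ} (hts : T.Adj t s) : s ∈ branch T t s := by
  simp [branch, hts.reachable.symm.pos_dist_of_ne hts.ne']

theorem notMem_branch_iff (hT : T.IsTree) {t s u : τ} (hts : T.Adj t s) :
    u ∉ branch T t s ↔ u ∈ branch T s t := by
  have hne := hT.dist_ne_of_adj u hts
  simp only [branch, Set.mem_ofPred_eq]
  lia

theorem exists_adj_mem_branch (hT : T.IsTree) {t u : τ} (hut : u ≠ t) :
    ∃ s, T.Adj t s ∧ u ∈ branch T t s := by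
  obtain ⟨w, hw⟩ := hT.connected.exists_walk_length_eq_dist t u
  cases w with
  | nil => exact absurd rfl hut
  | @cons _ s _ hts w =>
    refine ⟨s, hts, ?_⟩
    have hle := dist_le w
    rw [Walk.length_cons] at hw
    rw [branch, Set.mem_ofPred_eq, T.dist_comm, T.dist_comm (v := t)]
    lia

theorem eq_of_mem_branch_of_mem_branch (hT : T.IsTree) {t s s' u : τ} (hs : T.Adj t s)
    (hs' : T.Adj t s') (hu : u ∈ branch T t s) (hu' : u ∈ branch T t s') : s = s' := by
  have exists_path_through : ∀ {s}, T.Adj t s → u ∈ branch T t s →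
      ∃ p : T.Path t u, p.1.snd = s := by
    intro s hs hu
    obtain ⟨w, hw⟩ := hT.connected.exists_walk_length_eq_dist s u
    have hlen : (Walk.cons hs w).length = T.dist t u := by
      rw [Walk.length_cons, hw, T.dist_comm (u := t), dist_eq_add_one_of_mem_branch hs hu,
        T.dist_comm]
    exact ⟨⟨_, Walk.isPath_of_length_eq_dist _ hlen⟩, Walk.snd_cons _ _⟩
  obtain ⟨p, hp⟩ := exists_path_through hs hu
  obtain ⟨q, hq⟩ := exists_path_through hs' hu'
  rw [← hp, ← hq, (hT.isAcyclic.subsingleton_path t u).elim p q]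

theorem eq_of_adj_of_mem_branch (hT : T.IsTree) {t s u v : τ} (hts : T.Adj t s)
    (huv : T.Adj u v) (hu : u ∈ branch T t s) (hv : v ∉ branch T t s) : v = t := by
  rw [notMem_branch_iff hT hts] at hv
  have hut := dist_eq_add_one_of_mem_branch hts hu
  have hvs := dist_eq_add_one_of_mem_branch hts.symm hv
  have huv₁ : T.dist u v = 1 := dist_eq_one_iff_adj.2 huv
  have hst₁ : T.dist s t = 1 := dist_eq_one_iff_adj.2 hts.symm
  have htri {a b c : τ} := hT.connected.dist_triangle (u := a) (v := b) (w := c)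
  have hut_le := htri (a := u) (b := v) (c := t)
  have hvs_le := htri (a := v) (b := u) (c := s)
  -- Otherwise `s` would lie both behind `u` and behind the neighbour `w` of `v` towards `t`.
  by_contra hne
  obtain ⟨w, hvw, hw⟩ := exists_adj_mem_branch hT (Ne.symm hne)
  have htw := dist_eq_add_one_of_mem_branch hvw hw
  have hsw_le := htri (a := s) (b := t) (c := w)
  have hvt_comm := T.dist_comm (u := v) (v := t)
  have hvs_comm := T.dist_comm (u := v) (v := s)
  have huv_comm := T.dist_comm (u := v) (v := u)
  have hut_comm := T.dist_comm (u := u) (v := t)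
  have hus_comm := T.dist_comm (u := u) (v := s)
  have hsu : s ∈ branch T v u := by
    rw [branch, Set.mem_ofPred_eq]
    lia
  have hsw : s ∈ branch T v w := by
    rw [branch, Set.mem_ofPred_eq]
    lia
  obtain rfl := eq_of_mem_branch_of_mem_branch hT huv.symm hvw hsu hsw
  lia

theorem eq_and_eq_of_adj_of_mem_branch (hT : T.IsTree) {t s u v : τ} (hts : T.Adj t s)
    (huv : T.Adj u v) (hu : u ∈ branch T t s) (hv : v ∉ branch T t s) : u = s ∧ v = t := by
  refine ⟨?_, eq_of_adj_of_mem_branch hT hts huv hu hv⟩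
  rw [notMem_branch_iff hT hts] at hv
  rw [← notMem_branch_iff hT hts.symm] at hu
  exact eq_of_adj_of_mem_branch hT hts.symm huv.symm hv hu

theorem dist_map_of_injOn_neighborSet {α : Type v} {L : SimpleGraph α} (hT : T.IsAcyclic)
    (f : L →g T) (hf : ∀ p, Set.InjOn f (L.neighborSet p)) {p q : α} (hpq : L.Reachable p q) :
    T.dist (f p) (f q) = L.dist p q := by
  obtain ⟨w, hw, hlen⟩ := hpq.exists_path_of_dist
  have isPath_map : (w.map f).IsPath := by
    clear hlen hpq
    induction w with
    | nil => simp
    | @cons a b c hab w ih =>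
      rw [Walk.cons_isPath_iff] at hw
      have hpath := ih hw.1
      cases w with
      | nil => simpa using (f.map_adj hab).ne
      | @cons _ d _ hbd w =>
        rw [hT.isPath_iff_isChain] at hpath ⊢
        simp only [Walk.map_cons, Walk.edges_cons, List.isChain_cons_cons] at hpath ⊢
        refine ⟨fun heq => hw.2 ?_, hpath⟩
        rw [Sym2.eq_swap, Sym2.congr_right] at heq
        have had : a = d := hf b hab.symm hbd heq
        simp [had]
  obtain ⟨w', hw', hlen'⟩ := (hpq.map f).exists_path_of_dist
  have heq := congrArg (·.1.length)
    ((hT.subsingleton_path _ _).elim ⟨_, isPath_map⟩ ⟨w', hw'⟩)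
  rw [← hlen', ← heq, Walk.length_map, hlen]

end Trees

section TreeDecomposition

variable {V : Type u} {τ : Type v} {G : SimpleGraph V} {T : SimpleGraph τ} {part : τ → G.Subgraph}

/-- `(T, part)` is a tree-decomposition of `G`. The parts are subgraphs, not vertex sets, since
only then can they be graphs in their own right that need not be induced in `G`. -/
structure IsTreeDecomposition (T : SimpleGraph τ) (part : τ → G.Subgraph) : Prop where
  isTree : T.IsTree
  connected_nodes : ∀ x, (T.induce {t | x ∈ (part t).verts}).Connected
  exists_adj : ∀ {x y}, G.Adj x y → ∃ t, (part t).Adj x y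

/-- The adhesion set of two nodes of a tree-decomposition, of interest for adjacent nodes. -/
def adhesionSet (part : τ → G.Subgraph) (t s : τ) : Set V :=
  (part t).verts ∩ (part s).verts

/-- The union of the parts in the branch at `t` in the direction of `s`: one of the two sides of
the separation that a tree-decomposition induces at the edge `ts`. -/
def side (T : SimpleGraph τ) (part : τ → G.Subgraph) (t s : τ) : Set V :=
  {x | ∃ u ∈ branch T t s, x ∈ (part u).verts}

theorem adhesionSet_comm (t s : τ) : adhesionSet part t s = adhesionSet part s t :=
  Set.inter_comm _ _

theorem verts_subset_side {t s : τ} (hts : T.Adj t s) : (part s).verts ⊆ side T part t s :=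
  fun _ hx => ⟨s, self_mem_branch hts, hx⟩

namespace IsTreeDecomposition

variable {t s : τ}

theorem exists_mem (hT : IsTreeDecomposition T part) (x : V) : ∃ t, x ∈ (part t).verts :=
  let ⟨t⟩ := (hT.connected_nodes x).nonempty
  ⟨t.1, t.2⟩

theorem mem_side_or_mem_side (hT : IsTreeDecomposition T part) (hts : T.Adj t s) (x : V) :
    x ∈ side T part t s ∨ x ∈ side T part s t := by
  obtain ⟨u, hu⟩ := hT.exists_mem x
  by_cases hb : u ∈ branch T t s
  · exact Or.inl ⟨u, hb, hu⟩
  · exact Or.inr ⟨u, (notMem_branch_iff hT.isTree hts).1 hb, hu⟩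

theorem exists_adj_mem_side (hT : IsTreeDecomposition T part) {x : V} {u : τ}
    (hx : x ∈ (part u).verts) (hut : u ≠ t) : ∃ s, T.Adj t s ∧ x ∈ side T part t s :=
  let ⟨s, hts, hu⟩ := exists_adj_mem_branch hT.isTree hut
  ⟨s, hts, u, hu, hx⟩

theorem mem_adhesionSet (hT : IsTreeDecomposition T part) (hts : T.Adj t s) {x : V}
    (hx : x ∈ side T part t s) (hx' : x ∈ side T part s t) : x ∈ adhesionSet part t s := by
  obtain ⟨u, hu, hxu⟩ := hx
  obtain ⟨v, hv, hxv⟩ := hx'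
  obtain ⟨w⟩ := (hT.connected_nodes x).preconnected ⟨u, hxu⟩ ⟨v, hxv⟩
  obtain ⟨d, -, hfst, hsnd⟩ := w.exists_boundary_dart {a | a.1 ∈ branch T t s} hu
    ((notMem_branch_iff hT.isTree hts).2 hv)
  obtain ⟨hds, hdt⟩ := eq_and_eq_of_adj_of_mem_branch hT.isTree hts d.adj hfst hsnd
  exact ⟨hdt ▸ d.snd.2, hds ▸ d.fst.2⟩

theorem exists_mem_support_mem_adhesionSet (hT : IsTreeDecomposition T part) (hts : T.Adj t s)
    {x y : V} (hx : x ∈ side T part t s) (hy : y ∈ side T part s t) (w : G.Walk x y) :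
    ∃ a ∈ w.support, a ∈ adhesionSet part t s := by
  by_cases hy' : y ∈ side T part t s
  · exact ⟨y, w.end_mem_support, hT.mem_adhesionSet hts hy' hy⟩
  obtain ⟨d, hd, hfst, hsnd⟩ := w.exists_boundary_dart _ hx hy'
  obtain ⟨u, hu⟩ := hT.exists_adj d.adj
  have hub : u ∈ branch T s t :=
    (notMem_branch_iff hT.isTree hts).1 fun hb => hsnd ⟨u, hb, hu.snd_mem⟩
  exact ⟨d.fst, w.dart_fst_mem_support_of_mem_darts hd,
    hT.mem_adhesionSet hts hfst ⟨u, hub, hu.fst_mem⟩⟩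

theorem exists_mem_adhesionSet_dist_le (hT : IsTreeDecomposition T part) (hG : G.Connected)
    (hts : T.Adj t s) {x y : V} (hx : x ∈ side T part t s) (hy : y ∈ side T part s t) :
    ∃ a ∈ adhesionSet part t s, G.dist x a ≤ G.dist x y := by
  classical
  obtain ⟨w, hw⟩ := hG.exists_walk_length_eq_dist x y
  obtain ⟨a, haw, ha⟩ := hT.exists_mem_support_mem_adhesionSet hts hx hy w
  exact ⟨a, ha, (dist_le _).trans ((w.length_takeUntil_le_length haw).trans_eq hw)⟩

theorem eq_of_mem_side_of_mem_side (hT : IsTreeDecomposition T part) {s' : τ} (hs : T.Adj t s)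
    (hs' : T.Adj t s') {x : V} (hx : x ∈ side T part t s) (hx' : x ∈ side T part t s')
    (hxt : x ∉ (part t).verts) : s = s' := by
  obtain ⟨u, hu, hxu⟩ := hx
  by_contra hne
  have hub : u ∈ branch T s' t := (notMem_branch_iff hT.isTree hs').1 fun hu' =>
    hne (eq_of_mem_branch_of_mem_branch hT.isTree hs hs' hu hu')
  exact hxt (hT.mem_adhesionSet hs' hx' ⟨u, hub, hxu⟩).1

end IsTreeDecomposition

end TreeDecomposition

section OneEnded

universe w

variable {V : Type u} {τ : Type v} {W : Type w} {G : SimpleGraph V} {T : SimpleGraph τ}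
  {part : τ → G.Subgraph} {H : SimpleGraph W} {f : W → V} {t s : τ} {k L M R : ℕ}

/-- The image of `f` lies, on the `s`-side of the edge `ts` of a tree-decomposition, within
distance `R` of the adhesion set. -/
def IsSmallSide (T : SimpleGraph τ) (part : τ → G.Subgraph) (f : W → V) (R : ℕ) (t s : τ) : Prop :=
  ∀ h, f h ∈ side T part t s → ∃ a ∈ adhesionSet part t s, G.dist (f h) a ≤ R

namespace IsTreeDecomposition

theorem notMem_side_of_walk (hT : IsTreeDecomposition T part) (hG : G.Connected)
    (hf : ∀ h h', H.Adj h h' → G.dist (f h) (f h') ≤ L) (hts : T.Adj t s) {x y : W}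
    (w : H.Walk x y) (hw : ∀ h ∈ w.support, ∀ a ∈ adhesionSet part t s, L < G.dist (f h) a)
    (hx : f x ∈ side T part t s) : f y ∉ side T part s t := by
  intro hy
  by_cases hy' : f y ∈ side T part t s
  · simpa using hw y w.end_mem_support _ (hT.mem_adhesionSet hts hy' hy)
  obtain ⟨d, hd, hfst, hsnd⟩ := w.exists_boundary_dart (f ⁻¹' side T part t s) hx hy'
  obtain ⟨a, ha, hle⟩ := hT.exists_mem_adhesionSet_dist_le hG hts hfst
    ((hT.mem_side_or_mem_side hts _).resolve_left hsnd)
  have hlt := hw d.fst (w.dart_fst_mem_support_of_mem_darts hd) a ha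
  exact hlt.not_ge (hle.trans (hf _ _ d.adj))

theorem isSmallSide_or_isSmallSide (hT : IsTreeDecomposition T part) (hG : G.Connected)
    (hf : ∀ h h', H.Adj h h' → G.dist (f h) (f h') ≤ L) (hts : T.Adj t s) {X : Set W}
    (hX : ∀ x ∈ X, ∀ y ∈ X, ∃ w : H.Walk x y, ∀ h ∈ w.support, ∀ a ∈ adhesionSet part t s,
      L < G.dist (f h) a)
    (hXc : ∀ h ∉ X, ∃ a ∈ adhesionSet part t s, G.dist (f h) a ≤ R) :
    IsSmallSide T part f R t s ∨ IsSmallSide T part f R s t := by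
  by_cases hside : ∃ x ∈ X, f x ∈ side T part t s
  · obtain ⟨x, hxX, hx⟩ := hside
    refine Or.inr fun y hy => ?_
    rw [adhesionSet_comm]
    refine hXc y fun hyX => ?_
    obtain ⟨w, hw⟩ := hX x hxX y hyX
    exact hT.notMem_side_of_walk hG hf hts w hw hx hy
  · exact Or.inl fun y hy => hXc y fun hyX => hside ⟨y, hyX, hy⟩

-- If some `z` is mapped near the adhesion set, then everything mapped near it is close to `z`,
-- since the adhesion set is bounded; and outside a ball around `z` the graph `H` is connected.
theorem exists_forall_isSmallSide (hT : IsTreeDecomposition T part) (hG : G.Connected)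
    (hM : ∀ t s, T.Adj t s →
      ∀ x ∈ adhesionSet part t s, ∀ y ∈ adhesionSet part t s, G.dist x y ≤ M)
    (hH : H.Connected) (hlfH : LocallyFiniteGraph H) (hqtH : QuasiTransitive H)
    (hend : Subsingleton H.end) (hf : IsQIEmbeddingWith H G k f) :
    ∃ R, ∀ t s, T.Adj t s → IsSmallSide T part f R t s ∨ IsSmallSide T part f R s t := by
  obtain ⟨r, hr⟩ := exists_walk_far_from_uniform hH hlfH hqtH hend (k * (4 * k + M) + k)
  refine ⟨2 * k + k * r + k, fun t s hts => ?_⟩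
  have hf_adj : ∀ h h', H.Adj h h' → G.dist (f h) (f h') ≤ 2 * k := by
    intro h h' hadj
    have hle := (hf h h').2
    rw [dist_eq_one_iff_adj.2 hadj] at hle
    lia
  by_cases hz : ∃ z, ∃ a ∈ adhesionSet part t s, G.dist (f z) a ≤ 2 * k
  · obtain ⟨z, a, ha, hza⟩ := hz
    refine hT.isSmallSide_or_isSmallSide hG hf_adj hts (X := {h | r < H.dist z h}) ?_ ?_
    · intro x hx y hy
      obtain ⟨w, hw⟩ := hr z x y hx hy
      refine ⟨w, fun h hhw b hb => ?_⟩
      by_contra! hhb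
      have hzh : G.dist (f z) (f h) ≤ 4 * k + M := by
        have htri₁ := hG.dist_triangle (u := f z) (v := a) (w := f h)
        have htri₂ := hG.dist_triangle (u := a) (v := b) (w := f h)
        have hab := hM t s hts a ha b hb
        rw [G.dist_comm] at hhb
        lia
      have hle : H.dist z h ≤ k * (4 * k + M) + k := (hf z h).1.trans (by gcongr)
      exact (hw h hhw).not_ge hle
    · intro h hh
      have hhr : H.dist h z ≤ r := by rw [H.dist_comm]; exact not_lt.1 hh
      refine ⟨a, ha, ?_⟩
      calc G.dist (f h) a ≤ G.dist (f h) (f z) + G.dist (f z) a := hG.dist_triangle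
        _ ≤ (k * H.dist h z + k) + 2 * k := add_le_add (hf h z).2 hza
        _ ≤ (k * r + k) + 2 * k := by gcongr
        _ = 2 * k + k * r + k := by ring
  · push Not at hz
    refine hT.isSmallSide_or_isSmallSide hG hf_adj hts (X := Set.univ) ?_ (by simp)
    intro x _ y _
    obtain ⟨w⟩ := hH.preconnected x y
    exact ⟨w, fun h _ => hz h⟩

-- Orient every edge away from a small side. Among the nodes towards which every edge on the path
-- from a fixed node `t₀` is oriented, one at maximal distance from `t₀` is a sink.
theorem exists_sink (hT : IsTreeDecomposition T part) (hG : G.Connected)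
    (hlfG : LocallyFiniteGraph G) (hfin : ∀ x, {t | x ∈ (part t).verts}.Finite) [Nonempty W]
    (hsmall : ∀ t s, T.Adj t s → IsSmallSide T part f R t s ∨ IsSmallSide T part f R s t) :
    ∃ t, ∀ s, T.Adj t s → IsSmallSide T part f R t s := by
  obtain ⟨h₀⟩ := ‹Nonempty W›
  obtain ⟨t₀, ht₀⟩ := hT.exists_mem (f h₀)
  let P : Set τ := {t | ∀ s, T.Adj t s → t₀ ∈ branch T t s → IsSmallSide T part f R t s}
  have ht₀P : t₀ ∈ P := fun s _ hb => by simp [branch] at hb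
  have hP : P.Finite := by
    refine ((finite_setOf_dist_le hG hlfG (f h₀) R).biUnion fun a _ => hfin a).subset ?_
    intro t ht
    rw [Set.mem_iUnion₂]
    by_cases htt₀ : t₀ = t
    · exact ⟨f h₀, by simp, htt₀ ▸ ht₀⟩
    · obtain ⟨s, hts, hb⟩ := exists_adj_mem_branch hT.isTree htt₀
      obtain ⟨a, ha, hle⟩ := ht s hts hb h₀ ⟨t₀, hb, ht₀⟩
      exact ⟨a, hle, ha.1⟩
  obtain ⟨t, ht, hmax⟩ := hP.exists_maximalFor (T.dist t₀) P ⟨t₀, ht₀P⟩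
  refine ⟨t, fun s hts => ?_⟩
  by_cases hb : t₀ ∈ branch T t s
  · exact ht s hts hb
  rw [notMem_branch_iff hT.isTree hts] at hb
  refine (hsmall t s hts).resolve_right fun hst => ?_
  have hsP : s ∈ P := fun s' hss' hb' => by
    rwa [eq_of_mem_branch_of_mem_branch hT.isTree hss' hts.symm hb' hb]
  have hdist := dist_eq_add_one_of_mem_branch hts.symm hb
  have hle := hmax hsP (by lia)
  lia

theorem exists_mem_part_dist_le (hT : IsTreeDecomposition T part)
    (ht : ∀ s, T.Adj t s → IsSmallSide T part f R t s) (h : W) :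
    ∃ a ∈ (part t).verts, G.dist (f h) a ≤ R := by
  obtain ⟨u, hu⟩ := hT.exists_mem (f h)
  by_cases hut : u = t
  · exact ⟨f h, hut ▸ hu, by simp⟩
  · obtain ⟨s, hts, hs⟩ := hT.exists_adj_mem_side hu hut
    obtain ⟨a, ha, hle⟩ := ht s hts h hs
    exact ⟨a, ha.1, hle⟩

theorem exists_retraction (hT : IsTreeDecomposition T part) (hG : G.Connected)
    (ht : (part t).verts.Nonempty) :
    ∃ ρ : V → (part t).verts, (∀ p : (part t).verts, ρ p = p) ∧
      ∀ s x, T.Adj t s → x ∈ side T part t s → (ρ x : V) ∈ (part s).verts := by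
  obtain ⟨y, hy⟩ := ht
  have exists_image : ∀ x, ∃ p : (part t).verts, (x ∈ (part t).verts → (p : V) = x) ∧
      ∀ s, T.Adj t s → x ∈ side T part t s → (p : V) ∈ (part s).verts := by
    intro x
    by_cases hxt : x ∈ (part t).verts
    · exact ⟨⟨x, hxt⟩, fun _ => rfl, fun s hts hx =>
        (hT.mem_adhesionSet hts hx (verts_subset_side hts.symm hxt)).2⟩
    · obtain ⟨u, hu⟩ := hT.exists_mem x
      obtain ⟨s, hts, hx⟩ := hT.exists_adj_mem_side hu
        (by rintro rfl; exact hxt hu : u ≠ t)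
      obtain ⟨a, ha, -⟩ :=
        hT.exists_mem_adhesionSet_dist_le hG hts hx (verts_subset_side hts.symm hy)
      refine ⟨⟨a, ha.1⟩, fun hx' => absurd hx' hxt, fun s' hts' hx' => ?_⟩
      rw [← hT.eq_of_mem_side_of_mem_side hts hts' hx hx' hxt]
      exact ha.2
  choose ρ hρ hρ_side using exists_image
  exact ⟨ρ, fun p => Subtype.ext (hρ p p.2), fun s x hts hx => hρ_side x s hts hx⟩

theorem dist_retraction_le (hT : IsTreeDecomposition T part) {ρ : V → (part t).verts}
    (hρ : ∀ p : (part t).verts, ρ p = p)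
    (hρ_side : ∀ s x, T.Adj t s → x ∈ side T part t s → (ρ x : V) ∈ (part s).verts)
    (hM : ∀ s, T.Adj t s → ∀ x y : (part t).verts, ↑x ∈ (part s).verts → ↑y ∈ (part s).verts →
      (part t).coe.dist x y ≤ M) {x y : V} (hxy : G.Adj x y) :
    (part t).coe.dist (ρ x) (ρ y) ≤ M + 1 := by
  obtain ⟨u, hu⟩ := hT.exists_adj hxy
  by_cases hut : u = t
  · subst hut
    rw [hρ ⟨x, hu.fst_mem⟩, hρ ⟨y, hu.snd_mem⟩, dist_eq_one_iff_adj.2 hu.coe]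
    lia
  · obtain ⟨s, hts, hb⟩ := exists_adj_mem_branch hT.isTree hut
    have hle := hM s hts (ρ x) (ρ y) (hρ_side s x hts ⟨u, hb, hu.fst_mem⟩)
      (hρ_side s y hts ⟨u, hb, hu.snd_mem⟩)
    lia

theorem exists_qiEmbeds_part (hT : IsTreeDecomposition T part) (hG : G.Connected)
    (hlfG : LocallyFiniteGraph G) (hpart : ∀ t, (part t).coe.Connected)
    (hfin : ∀ x, {t | x ∈ (part t).verts}.Finite)
    (hM : ∀ t s, T.Adj t s → ∀ x y : (part t).verts, ↑x ∈ (part s).verts → ↑y ∈ (part s).verts →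
      (part t).coe.dist x y ≤ M)
    (hH : H.Connected) (hlfH : LocallyFiniteGraph H) (hqtH : QuasiTransitive H)
    (hend : Subsingleton H.end) (hHG : QIEmbeds H G) :
    ∃ t, QIEmbeds H (part t).coe := by
  obtain ⟨k, f, hf⟩ := qiEmbeds_iff_exists_isQIEmbeddingWith.1 hHG
  have dist_coe_le : ∀ t (x y : (part t).verts), G.dist (x : V) y ≤ (part t).coe.dist x y :=
    fun t x y => dist_map_hom_le (part t).hom ((hpart t).preconnected x y)
  obtain ⟨R, hR⟩ := hT.exists_forall_isSmallSide hG (M := M)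
    (fun t s hts x hx y hy => (dist_coe_le t ⟨x, hx.1⟩ ⟨y, hy.1⟩).trans
      (hM t s hts _ _ hx.2 hy.2)) hH hlfH hqtH hend hf
  have := hH.nonempty
  obtain ⟨t, ht⟩ := hT.exists_sink hG hlfG hfin hR
  obtain ⟨ρ, hρ, hρ_side⟩ := hT.exists_retraction hG (Set.nonempty_coe_sort.1 (hpart t).nonempty)
  have hρ_lip := dist_map_le_mul_dist hG (hpart t) fun x y =>
    hT.dist_retraction_le hρ hρ_side (hM t)
  refine ⟨t, QIEmbeds.of_retraction hG (dist_coe_le t) hρ_lip hρ hf (R := R) fun h => ?_⟩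
  obtain ⟨a, ha, hle⟩ := hT.exists_mem_part_dist_le ht h
  exact ⟨⟨a, ha⟩, hle⟩

end IsTreeDecomposition

end OneEnded

section BoundedAdhesion

variable {V : Type u} {G : SimpleGraph V}

theorem GoodAction.exists_dist_le {K : Type u} {S : K → Set V} (h : GoodAction G S)
    (hS : ∀ k, (S k).Finite) : ∃ M : ℕ, ∀ k, ∀ x ∈ S k, ∀ y ∈ S k, G.dist x y ≤ M := by
  obtain ⟨Γ, -, I, hI, hIK⟩ := h
  obtain ⟨M, hM⟩ :=
    (hI.biUnion fun k _ => ((hS k).prod (hS k)).image fun p => G.dist p.1 p.2).bddAbove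
  refine ⟨M, fun k x hx y hy => ?_⟩
  obtain ⟨k', hk', g, -, hg⟩ := hIK k
  rw [← hg] at hx hy
  obtain ⟨x, hx, rfl⟩ := hx
  obtain ⟨y, hy, rfl⟩ := hy
  rw [dist_map_iso]
  exact hM (Set.mem_biUnion hk' ⟨(x, y), ⟨hx, hy⟩, rfl⟩)

end BoundedAdhesion

section BipGraph

variable {A B : Type u} {R : A → B → Prop} {a : A} {b : B}

theorem bipGraph_adj_inl_inr : (bipGraph R).Adj (Sum.inl a) (Sum.inr b) ↔ R a b := by
  simp [bipGraph, fromRel_adj]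

end BipGraph

namespace TreeAmalgData

variable {V1 V2 : Type u} {G1 : SimpleGraph V1} {G2 : SimpleGraph V2} (D : TreeAmalgData G1 G2)
  {p q : D.PlusV}

/-- The adhesion sets have uniformly bounded diameter in the factors. -/
def BoundedAdhesion : Prop :=
  ∃ M, (∀ k, ∀ x ∈ D.S1 k, ∀ y ∈ D.S1 k, G1.dist x y ≤ M) ∧
    ∀ l, ∀ x ∈ D.S2 l, ∀ y ∈ D.S2 l, G2.dist x y ≤ M

/-- The graph on the vertices of `G1 + G2` whose edges are the added edges only, so that the
vertices of `G1 ∗_T G2` are its components. -/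
def linkGraph : SimpleGraph D.PlusV :=
  SimpleGraph.fromRel D.idRel

variable {D}

theorem FiniteAdhesion.boundedAdhesion (hD : D.FiniteAdhesion) (h1 : GoodAction G1 D.S1)
    (h2 : GoodAction G2 D.S2) : D.BoundedAdhesion := by
  obtain ⟨M, hM⟩ := h1.exists_dist_le hD.1
  obtain ⟨N, hN⟩ := h2.exists_dist_le hD.2
  exact ⟨max M N, fun k x hx y hy => (hM k x hx y hy).trans (le_max_left M N),
    fun l x hx y hy => (hN l x hx y hy).trans (le_max_right M N)⟩

theorem linkGraph_adj_inl_inr {p : D.VT1 × V1} {q : D.VT2 × V2} :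
    D.linkGraph.Adj (Sum.inl p) (Sum.inr q) ↔ D.cross p q := by
  simp [linkGraph, fromRel_adj, idRel]

theorem not_linkGraph_adj_inl_inl {p q : D.VT1 × V1} :
    ¬ D.linkGraph.Adj (Sum.inl p) (Sum.inl q) := by
  simp [linkGraph, fromRel_adj, idRel]

theorem not_linkGraph_adj_inr_inr {p q : D.VT2 × V2} :
    ¬ D.linkGraph.Adj (Sum.inr p) (Sum.inr q) := by
  simp [linkGraph, fromRel_adj, idRel]

theorem toAmalg_eq_iff : D.toAmalg p = D.toAmalg q ↔ D.linkGraph.Reachable p q := by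
  constructor
  · intro hpq
    induction Quot.eqvGen_exact hpq with
    | rel p q h =>
      obtain ⟨p, q, rfl, rfl, h⟩ := h
      exact (linkGraph_adj_inl_inr.2 h).reachable
    | refl p => exact Reachable.refl p
    | symm p q h ih => exact (ih (Quot.eqvGen_sound h)).symm
    | trans p q r h h' ih ih' =>
      exact (ih (Quot.eqvGen_sound h)).trans (ih' (Quot.eqvGen_sound h'))
  · rintro ⟨w⟩
    induction w with
    | nil => rfl
    | cons h _ ih =>
      refine Eq.trans ?_ ih
      obtain ⟨-, h | h⟩ := (fromRel_adj _ _ _).1 h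
      · exact Quot.sound h
      · exact (Quot.sound h).symm

variable (D) in
/-- `site` as a homomorphism from the graph of added edges to the tree. -/
def siteHom : D.linkGraph →g bipGraph D.Tadj where
  toFun := D.site
  map_rel' {p q} h := by
    rcases p with p | p <;> rcases q with q | q
    · exact absurd h not_linkGraph_adj_inl_inl
    · exact bipGraph_adj_inl_inr.2 (linkGraph_adj_inl_inr.1 h).1
    · exact (bipGraph_adj_inl_inr.2 (linkGraph_adj_inl_inr.1 h.symm).1).symm
    · exact absurd h not_linkGraph_adj_inr_inr

-- This is where the bijectivity of the gluing maps enters.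
theorem injOn_siteHom (p : D.PlusV) : Set.InjOn D.siteHom (D.linkGraph.neighborSet p) := by
  intro q hq r hr hqr
  rw [mem_neighborSet] at hq hr
  rcases p with ⟨a, v⟩ | ⟨b, v⟩ <;> rcases q with ⟨c, x⟩ | ⟨c, x⟩ <;>
    rcases r with ⟨d, y⟩ | ⟨d, y⟩
  all_goals first
    | exact absurd hq not_linkGraph_adj_inl_inl
    | exact absurd hr not_linkGraph_adj_inl_inl
    | exact absurd hq not_linkGraph_adj_inr_inr
    | exact absurd hr not_linkGraph_adj_inr_inr
    | skip
  · obtain rfl : c = d := Sum.inr_injective hqr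
    obtain ⟨_, -, hx⟩ := linkGraph_adj_inl_inr.1 hq
    obtain ⟨_, -, hy⟩ := linkGraph_adj_inl_inr.1 hr
    obtain rfl : x = y := hx.trans hy.symm
    rfl
  · obtain rfl : c = d := Sum.inl_injective hqr
    obtain ⟨_, hxS, hx⟩ := linkGraph_adj_inl_inr.1 hq.symm
    obtain ⟨_, hyS, hy⟩ := linkGraph_adj_inl_inr.1 hr.symm
    obtain rfl : x = y := (D.glue_bij _ _).injOn hxS hyS (hx.symm.trans hy)
    rfl

theorem dist_site (hpq : D.toAmalg p = D.toAmalg q) :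
    (bipGraph D.Tadj).dist (D.site p) (D.site q) = D.linkGraph.dist p q :=
  dist_map_of_injOn_neighborSet D.isTree.isAcyclic D.siteHom injOn_siteHom (toAmalg_eq_iff.1 hpq)

theorem eq_of_toAmalg_eq_of_site_eq (hpq : D.toAmalg p = D.toAmalg q)
    (hsite : D.site p = D.site q) : p = q := by
  rw [← (toAmalg_eq_iff.1 hpq).dist_eq_zero_iff, ← dist_site hpq, hsite, dist_self]

theorem linkGraph_adj_of_toAmalg_eq (hpq : D.toAmalg p = D.toAmalg q)
    (hsite : (bipGraph D.Tadj).Adj (D.site p) (D.site q)) : D.linkGraph.Adj p q := by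
  rw [← dist_eq_one_iff_adj, ← dist_site hpq, dist_eq_one_iff_adj.2 hsite]

theorem amalgGraph_adj_of_plusRel (hpq : D.plusRel p q) (hne : D.toAmalg p ≠ D.toAmalg q) :
    D.amalgGraph.Adj (D.toAmalg p) (D.toAmalg q) := by
  refine (fromRel_adj _ _ _).2 ⟨hne, Or.inl ⟨p, q, rfl, rfl, ?_⟩⟩
  exact (fromRel_adj _ _ _).2 ⟨ne_of_apply_ne _ hne, Or.inl hpq⟩

variable (D) in
/-- The copy of `G1` at the tree vertex `a`. -/
def copyLeft (a : D.VT1) : Copy G1 D.amalgGraph :=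
  have injective : Function.Injective fun v => D.toAmalg (Sum.inl (a, v)) := fun _ _ h =>
    (Prod.ext_iff.1 (Sum.inl_injective (eq_of_toAmalg_eq_of_site_eq h rfl))).2
  { toHom :=
      { toFun := fun v => D.toAmalg (Sum.inl (a, v))
        map_rel' := fun h => amalgGraph_adj_of_plusRel ⟨rfl, h⟩ (injective.ne h.ne) }
    injective' := injective }

variable (D) in
/-- The copy of `G2` at the tree vertex `b`. -/
def copyRight (b : D.VT2) : Copy G2 D.amalgGraph :=
  have injective : Function.Injective fun v => D.toAmalg (Sum.inr (b, v)) := fun _ _ h =>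
    (Prod.ext_iff.1 (Sum.inr_injective (eq_of_toAmalg_eq_of_site_eq h rfl))).2
  { toHom :=
      { toFun := fun v => D.toAmalg (Sum.inr (b, v))
        map_rel' := fun h => amalgGraph_adj_of_plusRel ⟨rfl, h⟩ (injective.ne h.ne) }
    injective' := injective }

variable (D) in
/-- The copies of `G1` and `G2` in `G1 ∗_T G2`, as the parts of a tree-decomposition over `T`. -/
def part : D.VT1 ⊕ D.VT2 → D.amalgGraph.Subgraph
  | Sum.inl a => (D.copyLeft a).toSubgraph
  | Sum.inr b => (D.copyRight b).toSubgraph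

theorem mem_part_verts {x : D.AmalgV} {t : D.VT1 ⊕ D.VT2} :
    x ∈ (D.part t).verts ↔ t ∈ D.support x := by
  rcases t with a | b
  · constructor
    · rintro ⟨v, -, rfl⟩
      exact ⟨Sum.inl (a, v), rfl, rfl⟩
    · rintro ⟨⟨a, v⟩ | q, rfl, h⟩
      · cases h
        exact ⟨v, trivial, rfl⟩
      · cases h
  · constructor
    · rintro ⟨v, -, rfl⟩
      exact ⟨Sum.inr (b, v), rfl, rfl⟩
    · rintro ⟨p | ⟨b, v⟩, rfl, h⟩
      · cases h
      · cases h
        exact ⟨v, trivial, rfl⟩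

theorem connected_induce_support (x : D.AmalgV) :
    ((bipGraph D.Tadj).induce (D.support x)).Connected := by
  classical
  refine (connected_iff _).2 ⟨?_, ?_⟩
  · rintro ⟨-, p, rfl, rfl⟩ ⟨-, q, hq, rfl⟩
    obtain ⟨w⟩ := toAmalg_eq_iff.1 hq.symm
    refine ⟨(w.map D.siteHom).induce _ fun t ht => ?_⟩
    rw [Walk.support_map, List.mem_map] at ht
    obtain ⟨r, hr, rfl⟩ := ht
    exact ⟨r, (toAmalg_eq_iff.2 (w.takeUntil r hr).reachable).symm, rfl⟩
  · obtain ⟨p, rfl⟩ := Quot.exists_rep x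
    exact ⟨D.site p, p, rfl, rfl⟩

theorem exists_part_adj_of_plusRel (hpq : D.plusRel p q) (hne : D.toAmalg p ≠ D.toAmalg q) :
    ∃ t, (D.part t).Adj (D.toAmalg p) (D.toAmalg q) := by
  rcases p with ⟨a, v⟩ | ⟨b, v⟩ <;> rcases q with ⟨c, w⟩ | ⟨c, w⟩
  · obtain ⟨rfl, h⟩ : a = c ∧ G1.Adj v w := hpq
    exact ⟨Sum.inl a, v, w, h, rfl, rfl⟩
  · exact absurd (Quot.sound ⟨_, _, rfl, rfl, hpq⟩) hne
  · exact hpq.elim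
  · obtain ⟨rfl, h⟩ : b = c ∧ G2.Adj v w := hpq
    exact ⟨Sum.inr b, v, w, h, rfl, rfl⟩

variable (D) in
theorem isTreeDecomposition_part : IsTreeDecomposition (bipGraph D.Tadj) D.part where
  isTree := D.isTree
  connected_nodes x := by
    have hset : {t | x ∈ (D.part t).verts} = D.support x := Set.ext fun _ => mem_part_verts
    rw [hset]
    exact connected_induce_support x
  exists_adj {x y} hxy := by
    have exists_part_adj : ∀ p q, D.plusGraph.Adj p q → D.toAmalg p ≠ D.toAmalg q →
        ∃ t, (D.part t).Adj (D.toAmalg p) (D.toAmalg q) := by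
      intro p q hpq hne
      obtain ⟨-, h | h⟩ := (fromRel_adj _ _ _).1 hpq
      · exact exists_part_adj_of_plusRel h hne
      · exact (exists_part_adj_of_plusRel h hne.symm).imp fun _ => Subgraph.Adj.symm
    obtain ⟨hne, ⟨p, q, rfl, rfl, h⟩ | ⟨p, q, rfl, rfl, h⟩⟩ := (fromRel_adj _ _ _).1 hxy
    · exact exists_part_adj p q h hne
    · exact exists_part_adj q p h.symm hne

theorem exists_mem_S1 {a : D.VT1} {v : V1} {s : D.VT1 ⊕ D.VT2}
    (hs : (bipGraph D.Tadj).Adj (Sum.inl a) s)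
    (hv : D.toAmalg (Sum.inl (a, v)) ∈ (D.part s).verts) :
    ∃ b, ∃ hb : D.Tadj a b, s = Sum.inr b ∧ v ∈ D.S1 (D.lab1 a b hb) := by
  obtain ⟨q, hq, rfl⟩ := mem_part_verts.1 hv
  have hadj := linkGraph_adj_of_toAmalg_eq hq.symm hs
  rcases q with q | q
  · exact absurd hadj not_linkGraph_adj_inl_inl
  · obtain ⟨hb, hv, -⟩ := linkGraph_adj_inl_inr.1 hadj
    exact ⟨q.1, hb, rfl, hv⟩

theorem exists_mem_S2 {b : D.VT2} {v : V2} {s : D.VT1 ⊕ D.VT2}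
    (hs : (bipGraph D.Tadj).Adj (Sum.inr b) s)
    (hv : D.toAmalg (Sum.inr (b, v)) ∈ (D.part s).verts) :
    ∃ a, ∃ ha : D.Tadj a b, s = Sum.inl a ∧ v ∈ D.S2 (D.lab2 a b ha) := by
  obtain ⟨p, hp, rfl⟩ := mem_part_verts.1 hv
  have hadj := linkGraph_adj_of_toAmalg_eq hp.symm hs
  rcases p with p | p
  · obtain ⟨ha, hpS, hglue⟩ := linkGraph_adj_inl_inr.1 hadj.symm
    have hv : v ∈ D.S2 (D.lab2 p.1 b ha) := by
      rw [show v = _ from hglue]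
      exact (D.glue_bij _ _).mapsTo hpS
    exact ⟨p.1, ha, rfl, hv⟩
  · exact absurd hadj not_linkGraph_adj_inr_inr

theorem BoundedAdhesion.exists_dist_part_le (hD : D.BoundedAdhesion) :
    ∃ M, ∀ t s, (bipGraph D.Tadj).Adj t s → ∀ x y : (D.part t).verts,
      ↑x ∈ (D.part s).verts → ↑y ∈ (D.part s).verts → (D.part t).coe.dist x y ≤ M := by
  obtain ⟨M, hM1, hM2⟩ := hD
  refine ⟨M, ?_⟩
  rintro (a | b) s hs x y hx hy
  · obtain ⟨v, rfl⟩ := (D.copyLeft a).isoToSubgraph.surjective x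
    obtain ⟨w, rfl⟩ := (D.copyLeft a).isoToSubgraph.surjective y
    obtain ⟨b, hb, rfl, hv⟩ := exists_mem_S1 hs hx
    obtain ⟨_, _, hbb, hw⟩ := exists_mem_S1 hs hy
    cases hbb
    exact (dist_map_iso (D.copyLeft a).isoToSubgraph v w).trans_le (hM1 _ v hv w hw)
  · obtain ⟨v, rfl⟩ := (D.copyRight b).isoToSubgraph.surjective x
    obtain ⟨w, rfl⟩ := (D.copyRight b).isoToSubgraph.surjective y
    obtain ⟨a, ha, rfl, hv⟩ := exists_mem_S2 hs hx
    obtain ⟨_, _, haa, hw⟩ := exists_mem_S2 hs hy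
    cases haa
    exact (dist_map_iso (D.copyRight b).isoToSubgraph v w).trans_le (hM2 _ v hv w hw)

theorem connected_part (hG1 : G1.Connected) (hG2 : G2.Connected) (t : D.VT1 ⊕ D.VT2) :
    (D.part t).coe.Connected :=
  match t with
  | Sum.inl a => (D.copyLeft a).isoToSubgraph.connected_iff.1 hG1
  | Sum.inr b => (D.copyRight b).isoToSubgraph.connected_iff.1 hG2

end TreeAmalgData

section Factorisation

theorem GoodIterAmalg.ne_nil {Z : BGraph.{u}} {l : List BGraph.{u}} (h : GoodIterAmalg Z l) :
    l ≠ [] := by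
  induction h with
  | single X => exact List.cons_ne_nil X []
  | step _ _ _ ih _ => exact List.append_ne_nil_of_left_ne_nil ih _

theorem GoodIterAmalg.eq_of_singleton {X Z : BGraph.{u}} (h : GoodIterAmalg Z [X]) : Z = X := by
  generalize hl : [X] = l at h
  cases h with
  | single Z => exact (List.singleton_inj.1 hl).symm
  | step h1 h2 _ =>
    rcases List.append_eq_singleton_iff.1 hl.symm with ⟨h, -⟩ | ⟨-, h⟩
    · exact absurd h h1.ne_nil
    · exact absurd h h2.ne_nil

theorem GoodIterAmalg.goodAmalgStep {X Y Z : BGraph.{u}} (h : GoodIterAmalg Z [X, Y]) :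
    GoodAmalgStep X Y Z := by
  generalize hl : [X, Y] = l at h
  cases h with
  | single Z => simp at hl
  | step h1 h2 hstep =>
    rcases List.append_eq_cons_iff.1 hl.symm with ⟨h, -⟩ | ⟨l1, rfl, hl1⟩
    · exact absurd h h1.ne_nil
    rcases List.append_eq_singleton_iff.1 hl1.symm with ⟨rfl, rfl⟩ | ⟨-, h⟩
    · rwa [← h1.eq_of_singleton, ← h2.eq_of_singleton]
    · exact absurd h h2.ne_nil

universe w

theorem qiEmbeds_factor_of_oneEnded_general {V1 V2 : Type u} {VG : Type v} {VH : Type w}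
    {G1 : SimpleGraph V1} {G2 : SimpleGraph V2} {G : SimpleGraph VG} {H : SimpleGraph VH}
    (D : TreeAmalgData G1 G2) (e : G ≃g D.amalgGraph) (hfi : D.FiniteIdentification)
    (hba : D.BoundedAdhesion) (hG1 : G1.Connected) (hG2 : G2.Connected) (hG : G.Connected)
    (hlfG : LocallyFiniteGraph G) (hH : H.Connected) (hlfH : LocallyFiniteGraph H)
    (hqtH : QuasiTransitive H) (hend : Subsingleton H.end) (hHG : QIEmbeds H G) :
    QIEmbeds H G1 ∨ QIEmbeds H G2 := by
  obtain ⟨M, hM⟩ := hba.exists_dist_part_le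
  obtain ⟨a | b, h⟩ := D.isTreeDecomposition_part.exists_qiEmbeds_part (e.connected_iff.1 hG)
    (hlfG.of_iso e) (TreeAmalgData.connected_part hG1 hG2)
    (fun x => (hfi x).subset fun _ => TreeAmalgData.mem_part_verts.1) hM hH hlfH hqtH hend
    (hHG.trans_iso e)
  · exact Or.inl (h.trans_iso (D.copyLeft a).isoToSubgraph.symm)
  · exact Or.inr (h.trans_iso (D.copyRight b).isoToSubgraph.symm)

end Factorisation

/-- **Lemma.** Let `G` and `H` be connected quasi-transitive locally finite graphs and let
`(G1, G2)` be a factorisation of `G`.  If `H` has precisely one end and embeds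
quasi-isometrically into `G`, then it embeds quasi-isometrically into `G1` or into `G2`. -/
theorem qiEmbeds_factor_of_oneEnded {VG VH V1 V2 : Type u}
    (G : SimpleGraph VG) (H : SimpleGraph VH)
    (G1 : SimpleGraph V1) (G2 : SimpleGraph V2)
    (hcG : G.Connected) (hcH : H.Connected)
    (hlfG : LocallyFiniteGraph G) (hlfH : LocallyFiniteGraph H)
    (hqtG : QuasiTransitive G) (hqtH : QuasiTransitive H)
    (hfac : IsFactorisation ⟨VG, G⟩ [⟨V1, G1⟩, ⟨V2, G2⟩])
    (hone : OneEnded H)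
    (hemb : QIEmbeds H G) :
    QIEmbeds H G1 ∨ QIEmbeds H G2 := by
  obtain ⟨D, hfa, hfi, hact1, hact2, ⟨e⟩⟩ := hfac.2.goodAmalgStep
  exact qiEmbeds_factor_of_oneEnded_general D e hfi (hfa.boundedAdhesion hact1 hact2)
    (hfac.1 ⟨V1, G1⟩ (by simp)).1 (hfac.1 ⟨V2, G2⟩ (by simp)).1 hcG hlfG hcH hlfH hqtH hone.2 hemb
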